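/- Let X be a topological space, A an index set, and μ_α : X → ℝ (α ∈ A) a family of continuous nonnegative functions whose family of supports ({x : μ_α(x) ≠ 0})_{α ∈ A} is locally finite. Then for every finite subset F ⊆ A the set U(F) is open in X. -/

import Mathlib

/-- For a family of real-valued functions `μ_α : X → ℝ` and a finite subset `F ⊆ A`,
`U F = {x ∈ X : μ_β(x) < μ_α(x) for all α ∈ F and all β ∉ F}`. -/
def setU {X A : Type*} (μ : A → X → ℝ) (F : Finset A) : Set X :=
  {x | ∀ α ∈ F, ∀ β ∉ F, μ β x < μ α x}

/-- If the `μ_α` are continuous nonnegative functions on a topological space `X`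
whose family of supports is locally finite, then `U(F)` is open for every finite
`F ⊆ A`. -/
theorem setU_isOpen {X A : Type*} [TopologicalSpace X] (μ : A → X → ℝ)
    (hcont : ∀ α, Continuous (μ α))
    (hnonneg : ∀ α x, 0 ≤ μ α x)
    (hlf : LocallyFinite fun α => {x | μ α x ≠ 0}) :
    ∀ F : Finset A, IsOpen (setU μ F) := by
  intro F
  rw [isOpen_iff_mem_nhds]
  intro x hx
  obtain ⟨N, hN, hfin⟩ := hlf x
  have key : ∀ α ∈ F, ∀ᶠ y in nhds x, ∀ β ∉ F, μ β y < μ α y := by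
    intro α hα
    by_cases hne : ∃ β₀, β₀ ∉ F
    · obtain ⟨β₀, hβ₀⟩ := hne
      have hpos : 0 < μ α x := lt_of_le_of_lt (hnonneg β₀ x) (hx α hα β₀ hβ₀)
      have h1 : ∀ᶠ y in nhds x, 0 < μ α y :=
        continuousAt_const.eventually_lt (hcont α).continuousAt hpos
      have h2 := (Filter.eventually_all_finite hfin
        (l := nhds x) (p := fun β y => β ∉ F → μ β y < μ α y)).2 (by
          intro β _
          by_cases hβ : β ∈ F
          · exact Filter.Eventually.of_forall fun y h => absurd hβ h
          · filter_upwards [(hcont β).continuousAt.eventually_lt (hcont α).continuousAt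
              (hx α hα β hβ)] with y hy _ using hy)
      filter_upwards [h1, h2, hN] with y hy1 hy2 hyN β hβ
      by_cases h0 : μ β y = 0
      · rw [h0]; exact hy1
      · exact hy2 β ⟨y, h0, hyN⟩ hβ
    · push Not at hne
      exact Filter.Eventually.of_forall fun y β hβ => absurd (hne β) hβ
  exact (Filter.eventually_all_finset F).2 key
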